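/- Let X be a real Banach space with a normalized 1-unconditional basis (e_i)_{i∈ℕ} with biorthogonal functionals (e*_i)_{i∈ℕ}, and let x ∈ S_X. If every A ∈ M(x) is a finite set, then x is not a delta-point. -/

import Mathlib

noncomputable section

variable {X : Type*} [NormedAddCommGroup X] [NormedSpace ℝ X]

/-- `(e, f)` is a normalized 1-unconditional basis of `X` with biorthogonal functionals `f`. -/
structure IsUncondBasis (e : ℕ → X) (f : ℕ → X →L[ℝ] ℝ) : Prop where
  norm_e : ∀ i, ‖e i‖ = 1
  biorth : ∀ i j, f i (e j) = if i = j then (1 : ℝ) else 0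
  expand : ∀ x : X, HasSum (fun i => f i x • e i) x
  signs : ∀ (x : X) (θ : ℕ → ℝ), (∀ i, θ i = 1 ∨ θ i = -1) →
    ∃ y : X, HasSum (fun i => θ i • f i x • e i) y ∧ ‖y‖ = ‖x‖

/-- The projection `P_A x = ∑_{i ∈ A} f i x • e i`. -/
def basisProj (e : ℕ → X) (f : ℕ → X →L[ℝ] ℝ) (A : Set ℕ) (x : X) : X :=
  ∑' i : A, f i x • e i

/-- The family `M(x)` of minimal norm-giving subsets of the support of `x`. -/
def Mset (e : ℕ → X) (f : ℕ → X →L[ℝ] ℝ) (x : X) : Set (Set ℕ) :=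
  {A | ‖basisProj e f A x‖ = ‖x‖ ∧ ∀ i ∈ A, ‖basisProj e f A x - f i x • e i‖ < ‖x‖}

/-- `Δ_ε(x)`: the set of elements of the closed unit ball that are at distance
at least `2 - ε` from `x`. -/
def deltaSet (x : X) (ε : ℝ) : Set X :=
  {y | ‖y‖ ≤ 1 ∧ 2 - ε ≤ ‖x - y‖}

/-- `x` is a delta-point if for every `ε > 0` the point `x` belongs to the closed
convex hull of `Δ_ε(x)`. -/
def IsDeltaPoint (x : X) : Prop :=
  ∀ ε : ℝ, 0 < ε → x ∈ closure (convexHull ℝ (deltaSet x ε))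

/-!
Unconditionality makes the norm monotone in the moduli of the coordinates, so `A ↦ ‖P_A x‖` is
monotone, and it is continuous on the Cantor space of subsets of `ℕ`. Hence the sets with
`‖P_A x‖ = ‖x‖` form a compact family, each of them contains a member of `M(x)`, and if all members
of `M(x)` are finite, then `M(x)` is finite and `‖P_A x‖` stays away from `‖x‖` over all `A`
containing no member of `M(x)`.

Each `B ∈ M(x)` carries a norm-one functional `g_B` norming `x`, and `g_B y ≤ 1 / 2` as soon as
every coordinate of `y` in `B` is closer to `0` than to the corresponding coordinate of `x`. If `y`
is in the unit ball and almost at distance `2` from `x`, then the coordinates with this property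
almost carry the norm of `x`, hence contain some `B ∈ M(x)`. So `∑ g_B` separates `x` from `Δ_ε(x)`.
-/

/-- The set of coordinates at which `y` is strictly closer to `0` than to `x`. Outside it the
coordinates of `x - y` are dominated by those of `y`, so that it almost carries the norm of `x`
when `x` and `y` are almost at distance `‖x‖ + ‖y‖`. -/
def farCoords (f : ℕ → X →L[ℝ] ℝ) (x y : X) : Set ℕ :=
  {i | |f i y| < |f i x - f i y|}

/-- The sets `A` that carry the norm of `x`, of which `M(x)` consists of the minimal ones. -/
def normingSets (e : ℕ → X) (f : ℕ → X →L[ℝ] ℝ) (x : X) : Set (Set ℕ) :=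
  {A | ‖basisProj e f A x‖ = ‖x‖}

theorem mul_le_half_mul_of_abs_lt_abs_sub {a b t : ℝ} (hab : |b| < |a - b|) (hat : 0 ≤ a * t) :
    b * t ≤ a * t / 2 := by
  have hpos : 0 < a * (a - 2 * b) := by linarith [sq_lt_sq.mpr hab]
  have ha : 0 < a ^ 2 := sq_pos_of_ne_zero (left_ne_zero_of_mul hpos.ne')
  have hprod : 0 ≤ a ^ 2 * (t * (a - 2 * b)) := by
    linarith [mul_nonneg hat hpos.le]
  linarith [nonneg_of_mul_nonneg_right hprod ha]

section ClosedFamilies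

-- A subset of `ι` is encoded by a point `s` of the compact space `ι → Bool`, as `s ⁻¹' {true}`.
variable {ι : Type*} {𝒦 : Set (Set ι)}

theorem isClosed_setOf_preimage_true_subset (A : Set ι) :
    IsClosed {s : ι → Bool | s ⁻¹' {true} ⊆ A} := by
  have hInter : {s : ι → Bool | s ⁻¹' {true} ⊆ A} = ⋂ i ∈ Aᶜ, {s | s i = false} := by
    ext s
    simp [Set.subset_def, not_imp_comm]
  rw [hInter]
  exact isClosed_biInter fun i _ => isClosed_eq (continuous_apply i) continuous_const

theorem isOpen_setOf_subset_preimage_true {B : Set ι} (hB : B.Finite) :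
    IsOpen {s : ι → Bool | B ⊆ s ⁻¹' {true}} := by
  have hInter : {s : ι → Bool | B ⊆ s ⁻¹' {true}} = ⋂ i ∈ B, {s | s i = true} := by
    ext s
    simp [Set.subset_def]
  rw [hInter]
  exact hB.isOpen_biInter fun i _ =>
    (isOpen_discrete {true}).preimage (f := fun s : ι → Bool => s i) (continuous_apply i)

theorem exists_minimal_subset_of_isClosed (h𝒦 : IsClosed {s : ι → Bool | s ⁻¹' {true} ∈ 𝒦})
    {A : Set ι} (hA : A ∈ 𝒦) : ∃ B ⊆ A, Minimal (· ∈ 𝒦) B := by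
  refine zorn_superset_nonempty 𝒦 (fun c hc hchain hne => ?_) A hA
  suffices hlb : ({s : ι → Bool | s ⁻¹' {true} ∈ 𝒦} ∩
      ⋂ C : c, {s | s ⁻¹' {true} ⊆ C}).Nonempty by
    obtain ⟨s, hs𝒦, hsc⟩ := hlb
    exact ⟨s ⁻¹' {true}, hs𝒦, fun C hC => Set.mem_iInter.mp hsc ⟨C, hC⟩⟩
  by_contra hempty
  have : Nonempty c := hne.to_subtype
  have hdir : Directed (· ⊇ ·) fun C : c => {s : ι → Bool | s ⁻¹' {true} ⊆ C} := fun C D => by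
    rcases hchain.total C.2 D.2 with hCD | hDC
    · exact ⟨C, subset_rfl, fun _ hs => Set.Subset.trans hs hCD⟩
    · exact ⟨D, fun _ hs => Set.Subset.trans hs hDC, subset_rfl⟩
  obtain ⟨C, hC⟩ := h𝒦.isCompact.elim_directed_family_closed _
    (fun C : c => isClosed_setOf_preimage_true_subset C) (Set.not_nonempty_iff_eq_empty.mp hempty)
    hdir
  have hmem : C.1.boolIndicator ∈
      {s : ι → Bool | s ⁻¹' {true} ∈ 𝒦} ∩ {s | s ⁻¹' {true} ⊆ C} := by
    simpa [Set.preimage_boolIndicator_true] using hc C.2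
  simp [hC] at hmem

theorem finite_setOf_minimal_of_isClosed (h𝒦 : IsClosed {s : ι → Bool | s ⁻¹' {true} ∈ 𝒦})
    (hfin : ∀ A, Minimal (· ∈ 𝒦) A → A.Finite) : {A | Minimal (· ∈ 𝒦) A}.Finite := by
  obtain ⟨T, hT, hTfin, hcover⟩ := h𝒦.isCompact.elim_finite_subcover_image
    (b := {A | Minimal (· ∈ 𝒦) A}) (c := fun B => {s | B ⊆ s ⁻¹' {true}})
    (fun B hB => isOpen_setOf_subset_preimage_true (hfin B hB)) fun s hs => by
      obtain ⟨B, hBs, hB⟩ := exists_minimal_subset_of_isClosed h𝒦 hs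
      exact Set.mem_biUnion hB hBs
  refine hTfin.subset fun A hA => ?_
  have hAcover : A.boolIndicator ∈ ⋃ B ∈ T, {s | B ⊆ s ⁻¹' {true}} :=
    hcover (by simpa [Set.preimage_boolIndicator_true] using hA.prop)
  obtain ⟨B, hBT, hBA⟩ := Set.mem_iUnion₂.mp hAcover
  rw [Set.mem_ofPred_eq, Set.preimage_boolIndicator_true] at hBA
  rwa [← hA.eq_of_subset (hT hBT).prop hBA]

end ClosedFamilies

theorem IsDeltaPoint.apply_le {x : X} (hx : IsDeltaPoint x) {ε c : ℝ} (hε : 0 < ε) (g : X →L[ℝ] ℝ)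
    (hg : ∀ y ∈ deltaSet x ε, g y ≤ c) : g x ≤ c :=
  closure_minimal (convexHull_min hg (convex_halfSpace_le g.isLinear c))
    (isClosed_le g.continuous continuous_const) (hx ε hε)

theorem not_isDeltaPoint_of_finite_norming {ι : Type*} {S : Set ι} (hS : S.Finite) {x : X}
    {g : ι → X →L[ℝ] ℝ} {ε c : ℝ} (hε : 0 < ε) (hc : c < 1) (hg : ∀ i ∈ S, ‖g i‖ ≤ 1)
    (hgx : ∀ i ∈ S, g i x = 1) (hcover : ∀ y ∈ deltaSet x ε, ∃ i ∈ S, g i y ≤ c) :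
    ¬ IsDeltaPoint x := by
  lift S to Finset ι using hS
  intro hx
  have hsep : ∀ y ∈ deltaSet x ε, (∑ i ∈ S, g i) y ≤ S.card - (1 - c) := by
    intro y hy
    obtain ⟨j, hj, hjy⟩ := hcover y hy
    have hnonneg : ∀ i ∈ S, 0 ≤ 1 - g i y := fun i hi =>
      sub_nonneg.mpr <| (Real.le_norm_self _).trans <| by
        simpa using (g i).le_of_opNorm_le_of_le (hg i hi) hy.1
    have hsingle := Finset.single_le_sum hnonneg hj
    rw [Finset.sum_sub_distrib, Finset.sum_const, nsmul_one] at hsingle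
    rw [sum_apply]
    linarith
  have hle := hx.apply_le hε _ hsep
  rw [sum_apply, Finset.sum_congr rfl hgx, Finset.sum_const, nsmul_one] at hle
  linarith

namespace IsUncondBasis

variable {e : ℕ → X} {f : ℕ → X →L[ℝ] ℝ}

theorem coord_of_hasSum (hb : IsUncondBasis e f) {c : ℕ → ℝ} {z : X}
    (hz : HasSum (fun i => c i • e i) z) (j : ℕ) : f j z = c j := by
  have hsingle : HasSum (fun i => f j (c i • e i)) (f j (c j • e j)) :=
    hasSum_single j fun i hij => by simp [hb.biorth, hij.symm]
  simpa [hb.biorth] using (hz.mapL (f j)).unique hsingle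

theorem coord_sum_smul (hb : IsUncondBasis e f) (F : Finset ℕ) (c : ℕ → ℝ) (j : ℕ) :
    f j (∑ i ∈ F, c i • e i) = if j ∈ F then c j else 0 := by
  simp [hb.biorth]

theorem ext_coord (hb : IsUncondBasis e f) {z w : X} (h : ∀ i, f i z = f i w) : z = w := by
  have hz := hb.expand z
  simp only [h] at hz
  exact hz.unique (hb.expand w)

theorem norm_eq_of_abs_coord_eq (hb : IsUncondBasis e f) {z w : X}
    (h : ∀ i, |f i z| = |f i w|) : ‖z‖ = ‖w‖ := by
  choose θ hθ hθz using fun i => show ∃ t : ℝ, (t = 1 ∨ t = -1) ∧ t * f i w = f i z by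
    rcases abs_eq_abs.mp (h i) with hi | hi
    · exact ⟨1, by simp [hi]⟩
    · exact ⟨-1, by simp [hi]⟩
  obtain ⟨y, hy, hyw⟩ := hb.signs w θ hθ
  simp only [smul_smul, hθz] at hy
  rw [(hb.expand z).unique hy, hyw]

theorem norm_sub_two_mul_coord_smul (hb : IsUncondBasis e f) (u : X) (i : ℕ) :
    ‖u - (2 * f i u) • e i‖ = ‖u‖ := by
  refine hb.norm_eq_of_abs_coord_eq fun j => ?_
  rw [map_sub, map_smul, hb.biorth, smul_eq_mul]
  split_ifs with hj
  · rw [← hj, ← abs_neg]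
    ring_nf
  · simp

theorem norm_add_smul_le (hb : IsUncondBasis e f) (u : X) (i : ℕ) {c : ℝ}
    (hc : |f i u + c| ≤ |f i u|) : ‖u + c • e i‖ ≤ ‖u‖ := by
  have hseg : c ∈ segment ℝ 0 (-(2 * f i u)) := by
    rw [segment_eq_uIcc, Set.mem_uIcc]
    grind
  obtain ⟨s, t, hs, ht, hst, rfl⟩ := hseg
  have hmem : u + (s • 0 + t • -(2 * f i u)) • e i ∈ segment ℝ u (u - (2 * f i u) • e i) := by
    refine ⟨s, t, hs, ht, hst, ?_⟩
    rw [← eq_sub_iff_add_eq] at hst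
    subst hst
    module
  simpa [hb.norm_sub_two_mul_coord_smul] using
    convexOn_univ_norm.le_max_of_mem_segment (Set.mem_univ _) (Set.mem_univ _) hmem

theorem norm_le_of_abs_coord_le (hb : IsUncondBasis e f) {z w : X}
    (h : ∀ i, |f i z| ≤ |f i w|) : ‖z‖ ≤ ‖w‖ := by
  -- Replace the coordinates of `w` by those of `z` one at a time.
  have hlim : HasSum (fun i => (f i z - f i w) • e i) (z - w) := by
    simpa only [sub_smul] using (hb.expand z).sub (hb.expand w)
  have htend := (hlim.const_add w).norm
  rw [add_sub_cancel] at htend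
  refine le_of_tendsto' htend fun F => ?_
  induction F using Finset.induction_on with
  | empty => simp
  | insert i F hi ih =>
    rw [Finset.sum_insert hi, add_left_comm, add_comm]
    refine (hb.norm_add_smul_le _ i ?_).trans ih
    simpa only [map_add, hb.coord_sum_smul, hi, if_false, add_zero, add_sub_cancel] using h i

theorem hasSum_basisProj (hb : IsUncondBasis e f) (A : Set ℕ) (x : X) :
    HasSum (A.indicator fun i => f i x • e i) (basisProj e f A x) := by
  classical
  -- `P_A x` is the average of `x` and of `x` with the signs outside `A` flipped.
  obtain ⟨y, hy, -⟩ := hb.signs x (fun i => if i ∈ A then 1 else -1) fun i => by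
    split_ifs <;> simp
  have hsum : HasSum (A.indicator fun i => f i x • e i) ((1 / 2 : ℝ) • (x + y)) := by
    convert ((hb.expand x).add hy).const_smul (1 / 2 : ℝ) using 2 with i
    by_cases hi : i ∈ A <;> simp only [hi, Set.indicator_of_mem, Set.indicator_of_notMem,
      not_false_eq_true, if_true, if_false] <;> module
  have hproj : basisProj e f A x = (1 / 2 : ℝ) • (x + y) :=
    (hasSum_subtype_iff_indicator.mpr hsum).tsum_eq
  rwa [hproj]

theorem coord_basisProj (hb : IsUncondBasis e f) (A : Set ℕ) (x : X) (j : ℕ) :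
    f j (basisProj e f A x) = A.indicator (fun i => f i x) j := by
  refine hb.coord_of_hasSum ?_ j
  simpa only [Set.indicator_smul_left] using hb.hasSum_basisProj A x

theorem norm_basisProj_mono (hb : IsUncondBasis e f) (x : X) {A B : Set ℕ} (hAB : A ⊆ B) :
    ‖basisProj e f A x‖ ≤ ‖basisProj e f B x‖ :=
  hb.norm_le_of_abs_coord_le fun i => by
    rw [hb.coord_basisProj, hb.coord_basisProj]
    by_cases hi : i ∈ A
    · simp [hi, hAB hi]
    · simp [hi]

theorem norm_basisProj_le (hb : IsUncondBasis e f) (A : Set ℕ) (x : X) :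
    ‖basisProj e f A x‖ ≤ ‖x‖ :=
  hb.norm_le_of_abs_coord_le fun i => by
    rw [hb.coord_basisProj]
    by_cases hi : i ∈ A <;> simp [hi]

/-- The projection `P_A` as a bundled continuous linear map. -/
def projL (hb : IsUncondBasis e f) (A : Set ℕ) : X →L[ℝ] X :=
  LinearMap.mkContinuous
    { toFun := basisProj e f A
      map_add' := fun x y => hb.ext_coord fun i => by
        by_cases hi : i ∈ A <;> simp [hb.coord_basisProj, hi]
      map_smul' := fun c x => hb.ext_coord fun i => by
        by_cases hi : i ∈ A <;> simp [hb.coord_basisProj, hi] }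
    1 fun x => by simpa using hb.norm_basisProj_le A x

theorem projL_apply (hb : IsUncondBasis e f) (A : Set ℕ) (x : X) :
    hb.projL A x = basisProj e f A x :=
  rfl

theorem norm_projL_le (hb : IsUncondBasis e f) (A : Set ℕ) : ‖hb.projL A‖ ≤ 1 :=
  LinearMap.mkContinuous_norm_le _ zero_le_one _

theorem basisProj_sdiff_singleton (hb : IsUncondBasis e f) {A : Set ℕ} (x : X) {i : ℕ}
    (hi : i ∈ A) : basisProj e f (A \ {i}) x = basisProj e f A x - f i x • e i :=
  hb.ext_coord fun j => by
    rw [map_sub, map_smul, hb.biorth, hb.coord_basisProj, hb.coord_basisProj]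
    by_cases hj : i = j
    · simp [← hj, hi]
    · by_cases hjA : j ∈ A <;> simp [hjA, Ne.symm hj]

theorem continuous_basisProj (hb : IsUncondBasis e f) (x : X) :
    Continuous fun s : ℕ → Bool => basisProj e f (s ⁻¹' {true}) x := by
  -- Uniform limit of the finite partial sums: the tail of `P_A x` is dominated by the tail of `x`.
  let S (F : Finset ℕ) (s : ℕ → Bool) : X := ∑ i ∈ F, (if s i then f i x else 0) • e i
  have hS : TendstoUniformly S (fun s => basisProj e f (s ⁻¹' {true}) x) Filter.atTop := by
    refine Metric.tendstoUniformly_iff.mpr fun ε hε => ?_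
    filter_upwards [(hb.expand x).eventually (Metric.ball_mem_nhds x hε)] with F hF s
    rw [dist_comm, dist_eq_norm] at hF
    rw [dist_eq_norm]
    refine (hb.norm_le_of_abs_coord_le fun j => ?_).trans_lt hF
    rw [map_sub, map_sub, hb.coord_basisProj, hb.coord_sum_smul, hb.coord_sum_smul]
    by_cases hjF : j ∈ F <;> by_cases hjs : s j <;> simp [hjF, hjs]
  refine hS.continuous (Filter.Frequently.of_forall fun F => ?_)
  exact continuous_finsetSum F fun i _ =>
    ((continuous_of_discreteTopology (f := fun b : Bool => if b then f i x else 0)).comp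
      (continuous_apply i)).smul continuous_const

theorem isClosed_normingSets (hb : IsUncondBasis e f) (x : X) :
    IsClosed {s : ℕ → Bool | s ⁻¹' {true} ∈ normingSets e f x} :=
  isClosed_eq (hb.continuous_basisProj x).norm continuous_const

theorem isUpperSet_normingSets (hb : IsUncondBasis e f) (x : X) :
    IsUpperSet (normingSets e f x) := fun _ B hAB hA =>
  (hb.norm_basisProj_le B x).antisymm (hA.symm.trans_le (hb.norm_basisProj_mono x hAB))

theorem mem_Mset_iff_minimal (hb : IsUncondBasis e f) {x : X} {A : Set ℕ} :
    A ∈ Mset e f x ↔ Minimal (· ∈ normingSets e f x) A := by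
  rw [Set.minimal_iff_forall_sdiff_singleton fun _ _ hC hCB =>
    hb.isUpperSet_normingSets x hCB hC]
  refine and_congr_right fun _ => forall₂_congr fun i hi => ?_
  rw [← hb.basisProj_sdiff_singleton x hi]
  exact (hb.norm_basisProj_le _ x).lt_iff_ne

theorem exists_mem_Mset_subset (hb : IsUncondBasis e f) {x : X} {A : Set ℕ}
    (hA : A ∈ normingSets e f x) : ∃ B ∈ Mset e f x, B ⊆ A := by
  obtain ⟨B, hBA, hB⟩ :=
    exists_minimal_subset_of_isClosed (hb.isClosed_normingSets x) hA
  exact ⟨B, hb.mem_Mset_iff_minimal.mpr hB, hBA⟩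

theorem finite_Mset (hb : IsUncondBasis e f) {x : X} (hfin : ∀ A ∈ Mset e f x, A.Finite) :
    (Mset e f x).Finite := by
  simp only [hb.mem_Mset_iff_minimal] at hfin
  exact (finite_setOf_minimal_of_isClosed (hb.isClosed_normingSets x) hfin).subset
    fun _ => hb.mem_Mset_iff_minimal.mp

theorem exists_mem_Mset_subset_of_lt_norm_basisProj (hb : IsUncondBasis e f) {x : X}
    (hfin : ∀ A ∈ Mset e f x, A.Finite) :
    ∃ ε > 0, ∀ A : Set ℕ, ‖x‖ - ε < ‖basisProj e f A x‖ → ∃ B ∈ Mset e f x, B ⊆ A := by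
  let U : Set (ℕ → Bool) := ⋃ B ∈ Mset e f x, {s | B ⊆ s ⁻¹' {true}}
  have hU : IsOpen U := isOpen_biUnion fun B hB => isOpen_setOf_subset_preimage_true (hfin B hB)
  have hgap : ∀ s ∈ Uᶜ, 0 < ‖x‖ - ‖basisProj e f (s ⁻¹' {true}) x‖ := fun s hs => by
    refine sub_pos.mpr ((hb.norm_basisProj_le _ x).lt_of_ne fun heq => hs ?_)
    obtain ⟨B, hB, hBs⟩ := hb.exists_mem_Mset_subset heq
    exact Set.mem_biUnion hB hBs
  obtain ⟨ε, hε, hle⟩ := hU.isClosed_compl.isCompact.exists_forall_le'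
    (continuous_const.sub (hb.continuous_basisProj x).norm).continuousOn hgap
  refine ⟨ε, hε, fun A hA => ?_⟩
  have hAU : A.boolIndicator ∈ U := by
    by_contra hAU
    have hfar : ε ≤ ‖x‖ - ‖basisProj e f (A.boolIndicator ⁻¹' {true}) x‖ := hle _ hAU
    rw [Set.preimage_boolIndicator_true] at hfar
    linarith
  simpa [U, Set.preimage_boolIndicator_true] using hAU

theorem coord_mul_apply_nonneg_of_apply_eq_norm (hb : IsUncondBasis e f) {h : X →L[ℝ] ℝ}
    (hh : ‖h‖ ≤ 1) {u : X} (hu : h u = ‖u‖) (i : ℕ) : 0 ≤ f i u * h (e i) := by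
  have hflip : h (u - (2 * f i u) • e i) ≤ ‖u‖ := calc
    h (u - (2 * f i u) • e i) ≤ ‖h (u - (2 * f i u) • e i)‖ := Real.le_norm_self _
    _ ≤ 1 * ‖u‖ := h.le_of_opNorm_le_of_le hh (hb.norm_sub_two_mul_coord_smul u i).le
    _ = ‖u‖ := one_mul _
  rw [map_sub, map_smul, smul_eq_mul, hu] at hflip
  linarith

theorem apply_basisProj_le_half (hb : IsUncondBasis e f) {h : X →L[ℝ] ℝ} (hh : ‖h‖ ≤ 1) {x y : X}
    {A : Set ℕ} (hx : h (basisProj e f A x) = ‖basisProj e f A x‖) (hA : A ⊆ farCoords f x y) :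
    h (basisProj e f A y) ≤ h (basisProj e f A x) / 2 := by
  refine hasSum_le (fun i => ?_) ((hb.hasSum_basisProj A y).mapL h)
    (((hb.hasSum_basisProj A x).mapL h).div_const 2)
  by_cases hi : i ∈ A
  · have hnonneg := hb.coord_mul_apply_nonneg_of_apply_eq_norm hh hx i
    rw [hb.coord_basisProj, Set.indicator_of_mem hi] at hnonneg
    simpa only [Set.indicator_of_mem hi, map_smul, smul_eq_mul] using
      mul_le_half_mul_of_abs_lt_abs_sub (hA hi) hnonneg
  · simp [hi]

theorem exists_norming_functional (hb : IsUncondBasis e f) {x : X} {A : Set ℕ}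
    (hA : A ∈ normingSets e f x) :
    ∃ g : X →L[ℝ] ℝ, ‖g‖ ≤ 1 ∧ g x = ‖x‖ ∧ ∀ y, A ⊆ farCoords f x y → g y ≤ ‖x‖ / 2 := by
  obtain ⟨h, hh, hx⟩ := exists_dual_vector'' ℝ (basisProj e f A x)
  have hgx : h (basisProj e f A x) = ‖x‖ := hx.trans hA
  refine ⟨h ∘L hb.projL A, ?_, ?_, fun y hy => ?_⟩
  · exact (h.opNorm_comp_le _).trans (mul_le_one₀ hh (norm_nonneg _) (hb.norm_projL_le A))
  · rwa [ContinuousLinearMap.comp_apply, hb.projL_apply]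
  · rw [ContinuousLinearMap.comp_apply, hb.projL_apply, ← hgx]
    exact hb.apply_basisProj_le_half hh hx hy

theorem norm_sub_le_norm_basisProj_farCoords_add (hb : IsUncondBasis e f) (x y : X) :
    ‖x - y‖ ≤ ‖basisProj e f (farCoords f x y) x‖ + ‖y‖ := by
  have hrest : ‖x - y - basisProj e f (farCoords f x y) x‖ ≤ ‖y‖ := by
    refine hb.norm_le_of_abs_coord_le fun i => ?_
    rw [map_sub, map_sub, hb.coord_basisProj]
    by_cases hi : i ∈ farCoords f x y
    · simp [hi]
    · simpa [hi] using not_lt.mp hi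
  linarith [norm_le_norm_add_norm_sub' (x - y) (basisProj e f (farCoords f x y) x)]

end IsUncondBasis

theorem not_deltaPoint_of_Mset_finite_general (e : ℕ → X) (f : ℕ → X →L[ℝ] ℝ)
    (hb : IsUncondBasis e f) (x : X) (hx : ‖x‖ = 1)
    (hfin : ∀ A ∈ Mset e f x, A.Finite) : ¬ IsDeltaPoint x := by
  choose! g hg hgx hgfar using fun B (hB : B ∈ Mset e f x) => hb.exists_norming_functional hB.1
  rw [hx] at hgx hgfar
  obtain ⟨ε, hε, hgap⟩ := hb.exists_mem_Mset_subset_of_lt_norm_basisProj hfin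
  refine not_isDeltaPoint_of_finite_norming (hb.finite_Mset hfin) (half_pos hε)
    one_half_lt_one hg hgx fun y hy => ?_
  obtain ⟨B, hB, hBfar⟩ := hgap (farCoords f x y) (by
    linarith [hy.1, hy.2, hb.norm_sub_le_norm_basisProj_farCoords_add x y])
  exact ⟨B, hB, hgfar B hB y hBfar⟩

/-- Let `x` be in the unit sphere of a Banach space with a normalized 1-unconditional
basis. If every member of `M(x)` is finite, then `x` is not a delta-point. -/
theorem not_deltaPoint_of_Mset_finite [CompleteSpace X] (e : ℕ → X) (f : ℕ → X →L[ℝ] ℝ)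
    (hb : IsUncondBasis e f) (x : X) (hx : ‖x‖ = 1)
    (hfin : ∀ A ∈ Mset e f x, A.Finite) : ¬ IsDeltaPoint x :=
  not_deltaPoint_of_Mset_finite_general e f hb x hx hfin
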